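/- A recognizable language S ⊆ A* is completely reducible over ℚ if and only if its characteristic series 𝟙_S is a ℚ-linear combination of characteristic series of birecurrent languages. -/

import Mathlib

namespace Birec

variable {A : Type*}

/-- The left quotient `u⁻¹S = {v | u v ∈ S}`. -/
def leftQuot (S : Set (List A)) (u : List A) : Set (List A) := {v | u ++ v ∈ S}

/-- A language is recognizable iff it has finitely many left quotients (Nerode). -/
def Recognizable (S : Set (List A)) : Prop := (Set.range (leftQuot S)).Finite

/-- The reversal `S̃` of a language. -/
def langRev (S : Set (List A)) : Set (List A) := {w | w.reverse ∈ S}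

/-- A recognizable set is recurrent if its minimal automaton (whose states are the
nonempty left quotients) is strongly connected. -/
def Recurrent (S : Set (List A)) : Prop :=
  Recognizable S ∧
    ∀ u v : List A, (leftQuot S u).Nonempty → (leftQuot S v).Nonempty →
      ∃ w : List A, leftQuot S (u ++ w) = leftQuot S v

/-- A set is birecurrent if it is recurrent together with its reversal. -/
def Birecurrent (S : Set (List A)) : Prop := Recurrent S ∧ Recurrent (langRev S)

/-- A set is dense if every word is a factor of one of its words. -/
def LangDense (S : Set (List A)) : Prop := ∀ v : List A, ∃ u w : List A, u ++ v ++ w ∈ S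

end Birec
namespace Birec

variable {A : Type*}

/-- The characteristic series of a language, as a function `A* → ℚ`. -/
noncomputable def charFun (S : Set (List A)) : List A → ℚ := S.indicator 1

/-- The shift operator `τ ↦ τ · u`, where `(τ · u)(v) = τ(u v)`; this is the linear
action underlying the syntactic representation. -/
def shiftOp (u : List A) : (List A → ℚ) →ₗ[ℚ] (List A → ℚ) where
  toFun τ := fun v => τ (u ++ v)
  map_add' := fun _ _ => rfl
  map_smul' := fun _ _ => rfl

/-- The syntactic space of a series `σ`: the subspace of `ℚ⟨⟨A⟩⟩` spanned by the
series `σ · u` for `u ∈ A*`. -/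
def synSpace (σ : List A → ℚ) : Submodule ℚ (List A → ℚ) :=
  Submodule.span ℚ (Set.range fun u : List A => shiftOp u σ)

/-- A subspace is invariant if it is stable under all shift operators. -/
def InvariantSub (W : Submodule ℚ (List A → ℚ)) : Prop :=
  ∀ τ ∈ W, ∀ u : List A, shiftOp u τ ∈ W

/-- An invariant subspace is irreducible if it is nonzero and has no nontrivial
invariant subspace. -/
def IrreducibleSub (W : Submodule ℚ (List A → ℚ)) : Prop :=
  W ≠ ⊥ ∧ ∀ W' : Submodule ℚ (List A → ℚ), W' ≤ W → InvariantSub W' → W' = ⊥ ∨ W' = W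

/-- A series is completely reducible if its syntactic space is a direct sum of
invariant irreducible subspaces (equivalently, its syntactic representation is a
direct sum of irreducible representations). -/
def CompletelyReducibleSeries (σ : List A → ℚ) : Prop :=
  ∃ (n : ℕ) (W : Fin n → Submodule ℚ (List A → ℚ)),
    (∀ i, W i ≤ synSpace σ ∧ InvariantSub (W i) ∧ IrreducibleSub (W i)) ∧
    iSupIndep W ∧ (⨆ i, W i) = synSpace σ

/-- A language is completely reducible if its characteristic series is. -/
noncomputable def CompletelyReducibleLang (S : Set (List A)) : Prop :=
  CompletelyReducibleSeries (charFun S)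

/-- The rank of the element `ψ_σ(u)` of the syntactic monoid, i.e. the dimension of the
image of the syntactic space under the shift by `u`. -/
noncomputable def psiRank (σ : List A → ℚ) (u : List A) : ℕ :=
  Module.finrank ℚ ↥(Submodule.map (shiftOp u) (synSpace σ))

/-- `u` induces an element of minimal nonzero rank of the syntactic monoid. -/
def IsMinNonzeroPsiRank (σ : List A → ℚ) (u : List A) : Prop :=
  psiRank σ u ≠ 0 ∧ ∀ v : List A, psiRank σ v ≠ 0 → psiRank σ u ≤ psiRank σ v

/-- The eventual kernel `EK(S)`: the intersection (inside the syntactic space) of the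
kernels of all elements of minimal nonzero rank of the syntactic monoid. -/
noncomputable def EK (S : Set (List A)) : Submodule ℚ (List A → ℚ) :=
  synSpace (charFun S) ⊓
    ⨅ u ∈ {u : List A | IsMinNonzeroPsiRank (charFun S) u}, LinearMap.ker (shiftOp u)

/-- The eventual range `ER(S)`: the subspace spanned by the images of all elements of
minimal nonzero rank of the syntactic monoid. -/
noncomputable def ER (S : Set (List A)) : Submodule ℚ (List A → ℚ) :=
  ⨆ u ∈ {u : List A | IsMinNonzeroPsiRank (charFun S) u},
    Submodule.map (shiftOp u) (synSpace (charFun S))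

end Birec
namespace Birec

variable {A : Type*}

/-- A series is rational with a finite set of coefficients iff it has finitely many
left quotients `u⁻¹σ` (Nerode criterion for series). -/
def SeriesRecognizable (σ : List A → ℚ) : Prop :=
  (Set.range fun u : List A => (shiftOp u σ : List A → ℚ)).Finite

/-- A rational series with a finite set of coefficients is recurrent if its minimal
deterministic automaton with scalar output function, whose states are the nonzero
quotients `u⁻¹σ`, is strongly connected. -/
def SeriesRecurrent (σ : List A → ℚ) : Prop :=
  SeriesRecognizable σ ∧
    ∀ u v : List A, shiftOp u σ ≠ 0 → shiftOp v σ ≠ 0 →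
      ∃ w : List A, shiftOp (u ++ w) σ = shiftOp v σ

/-- The reversal of a series. -/
def seriesRev (σ : List A → ℚ) : List A → ℚ := fun w => σ w.reverse

/-- A series is birecurrent if both it and its reversal are recurrent. -/
def SeriesBirecurrent (σ : List A → ℚ) : Prop :=
  SeriesRecurrent σ ∧ SeriesRecurrent (seriesRev σ)

end Birec

open Birec

namespace Birec

section Averaging

variable {U : Type*} [AddCommGroup U] [Module ℚ U] [FiniteDimensional ℚ U]

/-- The standard scalar product attached to a basis, averaged over a finite set of
endomorphisms. -/
noncomputable def averagedForm (Γ : Finset (Module.End ℚ U)) : LinearMap.BilinForm ℚ U :=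
  ∑ g ∈ Γ, ∑ i, LinearMap.BilinForm.linMulLin
    ((Module.finBasis ℚ U).coord i ∘ₗ g) ((Module.finBasis ℚ U).coord i ∘ₗ g)

theorem averagedForm_apply (Γ : Finset (Module.End ℚ U)) (x y : U) :
    averagedForm Γ x y = ∑ g ∈ Γ, ∑ i,
      (Module.finBasis ℚ U).coord i (g x) * (Module.finBasis ℚ U).coord i (g y) := by
  simp [averagedForm, LinearMap.sum_apply]

theorem averagedForm_self_eq_zero {Γ : Finset (Module.End ℚ U)} (h1 : 1 ∈ Γ) {x : U}
    (h : averagedForm Γ x x = 0) : x = 0 := by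
  rw [averagedForm_apply] at h
  have hnn : ∀ g ∈ Γ, 0 ≤ ∑ i, (Module.finBasis ℚ U).coord i (g x) *
      (Module.finBasis ℚ U).coord i (g x) :=
    fun g _ => Finset.sum_nonneg fun i _ => mul_self_nonneg _
  have h2 := (Finset.sum_eq_zero_iff_of_nonneg hnn).1 h 1 h1
  rw [Finset.sum_eq_zero_iff_of_nonneg fun i _ => mul_self_nonneg _] at h2
  refine (Module.finBasis ℚ U).ext_elem fun i => ?_
  simpa using h2 i (Finset.mem_univ i)

theorem averagedForm_invariant {Γ : Finset (Module.End ℚ U)}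
    (hmul : ∀ g ∈ Γ, ∀ h ∈ Γ, g * h ∈ Γ) {g : Module.End ℚ U} (hg : g ∈ Γ)
    (hinj : Function.Injective g) (x y : U) :
    averagedForm Γ (g x) (g y) = averagedForm Γ x y := by
  have hsurj : Function.Surjective g := LinearMap.injective_iff_surjective.1 hinj
  have hinjmul : Function.Injective fun h : Module.End ℚ U => h * g := fun a b hab =>
    LinearMap.ext fun z => by
      obtain ⟨z, rfl⟩ := hsurj z
      exact LinearMap.congr_fun hab z
  have himg : Γ.map ⟨_, hinjmul⟩ = Γ := by
    refine Finset.eq_of_subset_of_card_le ?_ (Finset.card_map _).ge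
    intro k hk
    obtain ⟨h, hh, rfl⟩ := Finset.mem_map.1 hk
    exact hmul h hh g hg
  rw [averagedForm_apply, averagedForm_apply]
  conv_rhs => rw [← himg]
  rw [Finset.sum_map]
  rfl

/-- A finite set of endomorphisms, closed under multiplication and consisting of injective maps
and possibly zero, acts semisimply. -/
theorem exists_isCompl_of_finite_of_injective {Γ : Set (Module.End ℚ U)} (hfin : Γ.Finite)
    (hmul : ∀ g ∈ Γ, ∀ h ∈ Γ, g * h ∈ Γ) (hinj : ∀ g ∈ Γ, g = 0 ∨ Function.Injective g)
    (N : Submodule ℚ U) (hN : ∀ g ∈ Γ, ∀ x ∈ N, g x ∈ N) :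
    ∃ N' : Submodule ℚ U, IsCompl N N' ∧ ∀ g ∈ Γ, ∀ x ∈ N', g x ∈ N' := by
  classical
  set Δ : Finset (Module.End ℚ U) := insert 1 hfin.toFinset
  have h1 : 1 ∈ Δ := Finset.mem_insert_self _ _
  have hmem : ∀ g ∈ Γ, g ∈ Δ := fun g hg => Finset.mem_insert_of_mem (hfin.mem_toFinset.2 hg)
  have hmulΔ : ∀ g ∈ Δ, ∀ h ∈ Δ, g * h ∈ Δ := by
    intro g hg h hh
    rcases Finset.mem_insert.1 hg with rfl | hg'
    · rwa [one_mul]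
    rcases Finset.mem_insert.1 hh with rfl | hh'
    · rwa [mul_one]
    exact hmem _ (hmul g (hfin.mem_toFinset.1 hg') h (hfin.mem_toFinset.1 hh'))
  have hsymm : ∀ x y, averagedForm Δ x y = averagedForm Δ y x := by
    intro x y
    simp only [averagedForm_apply, mul_comm]
  have hrefl : (averagedForm Δ).IsRefl := fun x y h => by rw [hsymm, h]
  refine ⟨(averagedForm Δ).orthogonal N,
    LinearMap.BilinForm.isCompl_orthogonal_of_restrict_nondegenerate hrefl ?_, ?_⟩
  · refine LinearMap.BilinForm.nondegenerate_restrict_of_disjoint_orthogonal _ hrefl ?_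
    rw [Submodule.disjoint_def]
    intro x hx hx'
    exact averagedForm_self_eq_zero h1 (hx' x hx)
  · intro g hg x hx
    rcases hinj g hg with rfl | hgi
    · simp
    have hsurj : Function.Surjective (g.restrict (hN g hg)) :=
      LinearMap.injective_iff_surjective.1 fun a b hab =>
        Subtype.ext (hgi (congrArg Subtype.val hab))
    rw [LinearMap.BilinForm.mem_orthogonal_iff] at hx ⊢
    intro n hn
    obtain ⟨n', hn'⟩ := hsurj ⟨n, hn⟩
    have : g n' = n := congrArg Subtype.val hn'
    rw [← this, averagedForm_invariant hmulΔ (hmem g hg) hgi]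
    exact hx n' n'.2

end Averaging

variable {A : Type*}

variable {A : Type*}

theorem shiftOp_append (u v : List A) (τ : List A → ℚ) :
    shiftOp (u ++ v) τ = shiftOp v (shiftOp u τ) := by
  funext w
  simp [shiftOp]

theorem shiftOp_apply (u v : List A) (τ : List A → ℚ) : shiftOp u τ v = τ (u ++ v) := rfl

theorem shiftOp_charFun (S : Set (List A)) (u : List A) :
    shiftOp u (charFun S) = charFun (leftQuot S u) := rfl

theorem charFun_eq_zero_iff {S : Set (List A)} : charFun S = 0 ↔ ¬ S.Nonempty := by
  rw [Set.not_nonempty_iff_eq_empty, charFun, Set.indicator_eq_zero']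
  simp [Function.support_one]

theorem invariantSub_synSpace (σ : List A → ℚ) : InvariantSub (synSpace σ) := by
  intro τ hτ u
  induction hτ using Submodule.span_induction with
  | mem x hx =>
    obtain ⟨v, rfl⟩ := hx
    exact Submodule.subset_span ⟨v ++ u, shiftOp_append _ _ _⟩
  | zero => simp
  | add x y _ _ hx hy => rw [map_add]; exact add_mem hx hy
  | smul c x _ hx => rw [map_smul]; exact Submodule.smul_mem _ _ hx

theorem mem_synSpace (σ : List A → ℚ) : σ ∈ synSpace σ :=
  Submodule.subset_span ⟨[], rfl⟩

theorem synSpace_le {σ : List A → ℚ} {W : Submodule ℚ (List A → ℚ)} (hW : InvariantSub W)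
    (h : σ ∈ W) : synSpace σ ≤ W := by
  rw [synSpace, Submodule.span_le]
  rintro _ ⟨u, rfl⟩
  exact hW _ h u

/-- The words act on `V` through a finite set of linear maps. -/
def FiniteAction (V : Submodule ℚ (List A → ℚ)) : Prop :=
  (Set.range fun u : List A => (shiftOp u).domRestrict V).Finite

theorem domRestrict_shiftOp_eq_iff {V : Submodule ℚ (List A → ℚ)} {u v : List A} :
    (shiftOp u).domRestrict V = (shiftOp v).domRestrict V ↔
      ∀ x ∈ V, shiftOp u x = shiftOp v x := by
  simp [LinearMap.ext_iff]

theorem finite_range_of_forall_eq {α β γ : Type*} {f : α → β} {g : α → γ}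
    (hf : (Set.range f).Finite) (h : ∀ a b, f a = f b → g a = g b) : (Set.range g).Finite := by
  cases isEmpty_or_nonempty α
  · exact Set.finite_range g
  · obtain ⟨a⟩ := ‹Nonempty α›
    have : Nonempty γ := ⟨g a⟩
    obtain ⟨e, rfl⟩ := (Function.factorsThrough_iff (f := f) g).1 fun a b => h a b
    rw [Set.range_comp]
    exact hf.image e

theorem FiniteAction.mono {V W : Submodule ℚ (List A → ℚ)} (hV : FiniteAction V) (h : W ≤ V) :
    FiniteAction W := by
  refine finite_range_of_forall_eq hV fun u v huv => ?_
  rw [domRestrict_shiftOp_eq_iff] at huv ⊢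
  exact fun x hx => huv x (h hx)

theorem Recognizable.finite_range_shiftOp {S : Set (List A)} (hS : Recognizable S) :
    (Set.range fun u : List A => shiftOp u (charFun S)).Finite :=
  finite_range_of_forall_eq hS fun u v h => by simp only [shiftOp_charFun, h]

theorem Recognizable.finiteDimensional_synSpace {S : Set (List A)} (hS : Recognizable S) :
    FiniteDimensional ℚ (synSpace (charFun S)) :=
  FiniteDimensional.span_of_finite ℚ hS.finite_range_shiftOp

theorem Recognizable.finiteAction_synSpace {S : Set (List A)} (hS : Recognizable S) :
    FiniteAction (synSpace (charFun S)) := by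
  set Q := Set.range fun u : List A => shiftOp u (charFun S)
  have hfin : Finite Q := hS.finite_range_shiftOp
  let act : List A → Q → Q := fun u q => ⟨shiftOp u q.1, by
    obtain ⟨_, ⟨v, rfl⟩⟩ := q
    exact ⟨v ++ u, shiftOp_append _ _ _⟩⟩
  refine finite_range_of_forall_eq (Set.toFinite (Set.range act)) fun u v h => ?_
  rw [domRestrict_shiftOp_eq_iff]
  intro x hx
  refine LinearMap.eqOn_span (f := shiftOp u) (g := shiftOp v) ?_ hx
  intro q hq
  exact congrArg Subtype.val (congrFun h ⟨q, hq⟩)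

/-- The word `e` acts on `V` with minimal nonzero rank. -/
def IsMinRank (V : Submodule ℚ (List A → ℚ)) (e : List A) : Prop :=
  V.map (shiftOp e) ≠ ⊥ ∧ ∀ u : List A, V.map (shiftOp u) ≠ ⊥ →
    Module.finrank ℚ (V.map (shiftOp e)) ≤ Module.finrank ℚ (V.map (shiftOp u))

theorem exists_isMinRank {V : Submodule ℚ (List A → ℚ)} (hV : V ≠ ⊥) : ∃ e, IsMinRank V e := by
  have hne : {u : List A | V.map (shiftOp u) ≠ ⊥}.Nonempty := by
    refine ⟨[], ?_⟩
    have : V.map (shiftOp []) = V := Submodule.map_id V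
    rwa [Set.mem_ofPred_eq, this]
  let f : List A → ℕ := fun u => Module.finrank ℚ (V.map (shiftOp u))
  exact ⟨Function.argminOn f _ hne, Function.argminOn_mem f _ hne,
    fun u hu => Function.argminOn_le f _ hu⟩

theorem map_shiftOp_append (V : Submodule ℚ (List A → ℚ)) (u v : List A) :
    V.map (shiftOp (u ++ v)) = (V.map (shiftOp u)).map (shiftOp v) := by
  rw [← Submodule.map_comp]
  congr 1
  ext1 τ
  exact shiftOp_append u v τ

theorem InvariantSub.map_le {V : Submodule ℚ (List A → ℚ)} (hV : InvariantSub V) (u : List A) :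
    V.map (shiftOp u) ≤ V := by
  rintro _ ⟨x, hx, rfl⟩
  exact hV x hx u

theorem IsMinRank.map_eq {V : Submodule ℚ (List A → ℚ)} [FiniteDimensional ℚ V]
    (hV : InvariantSub V) {e : List A} (he : IsMinRank V e) (y : List A)
    (h : V.map (shiftOp (e ++ (y ++ e))) ≠ ⊥) :
    (V.map (shiftOp e)).map (shiftOp (y ++ e)) = V.map (shiftOp e) := by
  rw [← map_shiftOp_append]
  refine Submodule.eq_of_le_of_finrank_le ?_ (he.2 _ h)
  rw [← List.append_assoc, map_shiftOp_append]
  exact Submodule.map_mono (hV.map_le _)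

theorem injOn_of_map_eq_self {E : Type*} [AddCommGroup E] [Module ℚ E] (U : Submodule ℚ E)
    [FiniteDimensional ℚ U] (f : E →ₗ[ℚ] E) (h : U.map f = U) : Set.InjOn f U := by
  have hmaps : ∀ x ∈ U, f x ∈ U := fun x hx => h ▸ Submodule.mem_map_of_mem hx
  have hsurj : Function.Surjective (f.restrict hmaps) := by
    rintro ⟨y, hy⟩
    rw [← h] at hy
    obtain ⟨x, hx, rfl⟩ := hy
    exact ⟨⟨x, hx⟩, rfl⟩
  intro x hx y hy hxy
  exact congrArg Subtype.val (LinearMap.injective_iff_surjective.2 hsurj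
    (a₁ := ⟨x, hx⟩) (a₂ := ⟨y, hy⟩) (Subtype.ext hxy))

/-- The `n`-fold concatenation of a word with itself. -/
def wordPow (w : List A) : ℕ → List A
  | 0 => []
  | n + 1 => wordPow w n ++ w

theorem wordPow_comm (x y : List A) (n : ℕ) :
    wordPow (x ++ y) n ++ x = x ++ wordPow (y ++ x) n := by
  induction n with
  | zero => simp [wordPow]
  | succ n ih =>
    have : wordPow (x ++ y) (n + 1) ++ x = (wordPow (x ++ y) n ++ x) ++ (y ++ x) := by
      simp [wordPow]
    rw [this, ih]
    simp [wordPow]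

theorem shiftOp_wordPow (w : List A) (n : ℕ) : shiftOp (wordPow w n) = (shiftOp w) ^ n := by
  induction n with
  | zero => rfl
  | succ n ih =>
    ext1 τ
    rw [wordPow, shiftOp_append, ih, pow_succ', Module.End.mul_apply]

theorem IsMinRank.exists_inverse {V : Submodule ℚ (List A → ℚ)} [FiniteDimensional ℚ V]
    (hV : InvariantSub V) (hfin : FiniteAction V) {e : List A} (he : IsMinRank V e) (y : List A)
    (h : V.map (shiftOp (e ++ (y ++ e))) ≠ ⊥) :
    (∃ z, ∀ x ∈ V, shiftOp (e ++ (y ++ e) ++ z) x = shiftOp e x) ∧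
      ∃ z, ∀ x ∈ V, shiftOp (z ++ (e ++ (y ++ e))) x = shiftOp e x := by
  have hU := he.map_eq hV y h
  set U := V.map (shiftOp e)
  have hUV : U ≤ V := hV.map_le e
  have hmap : ∀ n, U.map (shiftOp (y ++ e) ^ n) = U := by
    intro n
    induction n with
    | zero => exact Submodule.map_id U
    | succ n ih => rw [pow_succ', Module.End.mul_eq_comp, Submodule.map_comp, ih, hU]
  have hpow : ∃ n, ∀ x ∈ U, (shiftOp (y ++ e) ^ (n + 1)) x = x := by
    have hr : (Set.range fun n : ℕ => (shiftOp (wordPow (y ++ e) n)).domRestrict V).Finite :=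
      hfin.subset (by rintro _ ⟨n, rfl⟩; exact ⟨_, rfl⟩)
    obtain ⟨i, j, hij, heq⟩ : ∃ i j : ℕ, i < j ∧
        (shiftOp (wordPow (y ++ e) i)).domRestrict V =
          (shiftOp (wordPow (y ++ e) j)).domRestrict V := by
      by_contra! hcon
      refine Set.infinite_range_of_injective (f := fun n : ℕ =>
        (shiftOp (wordPow (y ++ e) n)).domRestrict V) ?_ hr
      intro i j hij
      rcases lt_trichotomy i j with hlt | heq | hlt
      · exact absurd hij (hcon i j hlt)
      · exact heq
      · exact absurd hij.symm (hcon j i hlt)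
    obtain ⟨n, rfl⟩ := Nat.exists_eq_add_of_lt hij
    refine ⟨n, fun x hx => ?_⟩
    rw [domRestrict_shiftOp_eq_iff] at heq
    have hx' := heq x (hUV hx)
    rw [shiftOp_wordPow, shiftOp_wordPow, add_assoc, pow_add, Module.End.mul_apply] at hx'
    have hmem : (shiftOp (y ++ e) ^ (n + 1)) x ∈ U := by
      rw [← hmap (n + 1)]
      exact Submodule.mem_map_of_mem hx
    exact (injOn_of_map_eq_self U _ (hmap i) hx hmem hx').symm
  obtain ⟨n, hn⟩ := hpow
  have key : ∀ x ∈ V, shiftOp (e ++ wordPow (y ++ e) (n + 1)) x = shiftOp e x := by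
    intro x hx
    rw [shiftOp_append, shiftOp_wordPow]
    exact hn _ (Submodule.mem_map_of_mem hx)
  refine ⟨⟨wordPow (y ++ e) n, fun x hx => ?_⟩, ⟨wordPow (e ++ y) n, fun x hx => ?_⟩⟩
  · rw [← key x hx, shiftOp_append e (wordPow _ _), shiftOp_wordPow, List.append_assoc,
      shiftOp_append e, shiftOp_append (y ++ e), shiftOp_wordPow, pow_succ, Module.End.mul_apply]
  · rw [← key x hx, ← wordPow_comm]
    simp [wordPow]

theorem IsMinRank.birecurrent_sandwich {V : Submodule ℚ (List A → ℚ)} [FiniteDimensional ℚ V]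
    (hV : InvariantSub V) (hfin : FiniteAction V) {e : List A} (he : IsMinRank V e)
    (m m' : List A) {h : V →ₗ[ℚ] (List A → ℚ)} (h0 : h ≠ 0) :
    Birecurrent {w | (shiftOp (e ++ (m ++ w ++ m' ++ e))).domRestrict V = h} := by
  have hne : ∀ y, (shiftOp (e ++ (y ++ e))).domRestrict V = h →
      V.map (shiftOp (e ++ (y ++ e))) ≠ ⊥ := by
    rintro y rfl hbot
    refine h0 (LinearMap.ext fun x => ?_)
    exact (Submodule.eq_bot_iff _).1 hbot _ (Submodule.mem_map_of_mem x.2)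
  refine ⟨⟨?_, ?_⟩, ⟨?_, ?_⟩⟩
  · refine finite_range_of_forall_eq hfin fun u v huv => ?_
    rw [domRestrict_shiftOp_eq_iff] at huv
    ext w
    have : (shiftOp (e ++ (m ++ (u ++ w) ++ m' ++ e))).domRestrict V =
        (shiftOp (e ++ (m ++ (v ++ w) ++ m' ++ e))).domRestrict V := by
      rw [domRestrict_shiftOp_eq_iff]
      intro x hx
      have := huv _ (hV x hx (e ++ m))
      simpa only [shiftOp_append] using congrArg (shiftOp (w ++ m' ++ e)) this
    simp only [leftQuot, Set.mem_ofPred_eq, this]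
  · rintro u v ⟨w, hw⟩ -
    have hw' : (shiftOp (e ++ ((m ++ u ++ w ++ m') ++ e))).domRestrict V = h := by
      simpa [leftQuot] using hw
    obtain ⟨⟨z, hz⟩, -⟩ := he.exists_inverse hV hfin _ (hne _ hw')
    refine ⟨w ++ m' ++ e ++ z ++ m ++ v, ?_⟩
    ext t
    have : (shiftOp
        (e ++ (m ++ (u ++ (w ++ m' ++ e ++ z ++ m ++ v) ++ t) ++ m' ++ e))).domRestrict V =
        (shiftOp (e ++ (m ++ (v ++ t) ++ m' ++ e))).domRestrict V := by
      rw [domRestrict_shiftOp_eq_iff]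
      intro x hx
      simpa only [shiftOp_append] using congrArg (shiftOp (m ++ v ++ t ++ m' ++ e)) (hz x hx)
    simp only [leftQuot, Set.mem_ofPred_eq, this]
  · have hrev : (Set.range fun u : List A => (shiftOp u.reverse).domRestrict V).Finite :=
      hfin.subset (by rintro _ ⟨n, rfl⟩; exact ⟨_, rfl⟩)
    refine finite_range_of_forall_eq hrev fun u v huv => ?_
    rw [domRestrict_shiftOp_eq_iff] at huv
    ext w
    have : (shiftOp (e ++ (m ++ (w.reverse ++ u.reverse) ++ m' ++ e))).domRestrict V =
        (shiftOp (e ++ (m ++ (w.reverse ++ v.reverse) ++ m' ++ e))).domRestrict V := by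
      rw [domRestrict_shiftOp_eq_iff]
      intro x hx
      have := huv _ (hV x hx (e ++ m ++ w.reverse))
      simpa only [shiftOp_append] using congrArg (shiftOp (m' ++ e)) this
    simp only [leftQuot, langRev, List.reverse_append, Set.mem_ofPred_eq, this]
  · rintro u v ⟨w, hw⟩ -
    have hw' : (shiftOp (e ++ ((m ++ w.reverse ++ u.reverse ++ m') ++ e))).domRestrict V = h := by
      simpa [leftQuot, langRev] using hw
    obtain ⟨-, ⟨z, hz⟩⟩ := he.exists_inverse hV hfin _ (hne _ hw')
    refine ⟨(v.reverse ++ m' ++ z ++ e ++ m ++ w.reverse).reverse, ?_⟩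
    ext t
    have : (shiftOp (e ++ (m ++ (t.reverse ++ ((v.reverse ++ m' ++ z ++ e ++ m ++ w.reverse)
        ++ u.reverse)) ++ m' ++ e))).domRestrict V
        = (shiftOp (e ++ (m ++ (t.reverse ++ v.reverse) ++ m' ++ e))).domRestrict V := by
      rw [domRestrict_shiftOp_eq_iff]
      intro x hx
      simpa only [shiftOp_append] using hz _ (hV x hx (e ++ m ++ t.reverse ++ v.reverse ++ m'))
    simp only [leftQuot, langRev, List.reverse_append, List.reverse_reverse, Set.mem_ofPred_eq]
    simp only [List.append_assoc] at this ⊢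
    rw [this]

/-- The space spanned by the characteristic series of birecurrent languages. -/
def birecurrentSpan (A : Type*) : Submodule ℚ (List A → ℚ) :=
  Submodule.span ℚ (charFun '' {L | Birecurrent L})

theorem IsMinRank.sandwich_mem_birecurrentSpan {V : Submodule ℚ (List A → ℚ)}
    [FiniteDimensional ℚ V] (hV : InvariantSub V) (hfin : FiniteAction V) {e : List A}
    (he : IsMinRank V e) (m m' t : List A) {g : List A → ℚ} (hg : g ∈ V) :
    (fun w => g (e ++ (m ++ w ++ m' ++ e) ++ t)) ∈ birecurrentSpan A := by
  classical
  have heq : (fun w => g (e ++ (m ++ w ++ m' ++ e) ++ t)) = ∑ h ∈ hfin.toFinset,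
      (h ⟨g, hg⟩ t) • charFun {w | (shiftOp (e ++ (m ++ w ++ m' ++ e))).domRestrict V = h} := by
    funext w
    rw [Finset.sum_apply, Finset.sum_eq_single
      ((shiftOp (e ++ (m ++ w ++ m' ++ e))).domRestrict V)]
    · simp [charFun, shiftOp_apply]
    · intro h _ hne
      simp [charFun, -List.append_assoc, hne.symm]
    · intro h
      exact absurd (hfin.mem_toFinset.2 ⟨_, rfl⟩) h
  rw [heq]
  refine Submodule.sum_mem _ fun h _ => ?_
  by_cases h0 : h = 0
  · simp [h0]
  · exact Submodule.smul_mem _ _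
      (Submodule.subset_span ⟨_, he.birecurrent_sandwich hV hfin m m' h0, rfl⟩)

theorem invariantSub_span {s : Set (List A → ℚ)} (hs : ∀ x ∈ s, ∀ u, shiftOp u x ∈ s) :
    InvariantSub (Submodule.span ℚ s) := by
  intro τ hτ u
  induction hτ using Submodule.span_induction with
  | mem x hx => exact Submodule.subset_span (hs x hx u)
  | zero => simp
  | add x y _ _ hx hy => rw [map_add]; exact add_mem hx hy
  | smul c x _ hx => rw [map_smul]; exact Submodule.smul_mem _ _ hx

/-- The invariant subspace generated by a subspace. -/
def invariantClosure (U : Submodule ℚ (List A → ℚ)) : Submodule ℚ (List A → ℚ) :=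
  Submodule.span ℚ {x | ∃ y ∈ U, ∃ m, shiftOp m y = x}

theorem invariantSub_invariantClosure (U : Submodule ℚ (List A → ℚ)) :
    InvariantSub (invariantClosure U) := by
  apply invariantSub_span
  rintro _ ⟨y, hy, m, rfl⟩ u
  exact ⟨y, hy, m ++ u, shiftOp_append _ _ _⟩

theorem le_invariantClosure (U : Submodule ℚ (List A → ℚ)) : U ≤ invariantClosure U :=
  fun x hx => Submodule.subset_span ⟨x, hx, [], rfl⟩

theorem invariantClosure_le {U W : Submodule ℚ (List A → ℚ)} (hW : InvariantSub W) (h : U ≤ W) :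
    invariantClosure U ≤ W := by
  rw [invariantClosure, Submodule.span_le]
  rintro _ ⟨y, hy, m, rfl⟩
  exact hW y (h hy) m

theorem eq_zero_of_irreducibleSub {W : Submodule ℚ (List A → ℚ)} (hW : InvariantSub W)
    (hirr : IrreducibleSub W) {e : List A} (he : W.map (shiftOp e) ≠ ⊥) {x : List A → ℚ}
    (hx : x ∈ W) (h : ∀ m, shiftOp (m ++ e) x = 0) : x = 0 := by
  let K : Submodule ℚ (List A → ℚ) := W ⊓ ⨅ m : List A, LinearMap.ker (shiftOp (m ++ e))
  have hK : ∀ {y}, y ∈ K ↔ y ∈ W ∧ ∀ m : List A, shiftOp (m ++ e) y = 0 := by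
    simp [K]
  have hKinv : InvariantSub K := by
    intro y hy u
    rw [hK] at hy ⊢
    refine ⟨hW y hy.1 u, fun m => ?_⟩
    rw [← shiftOp_append, ← List.append_assoc]
    exact hy.2 _
  rcases hirr.2 K inf_le_left hKinv with hbot | htop
  · exact (Submodule.eq_bot_iff _).1 hbot x (hK.2 ⟨hx, h⟩)
  · refine absurd ((Submodule.eq_bot_iff _).2 ?_) he
    rintro _ ⟨y, hy, rfl⟩
    have : y ∈ K := htop ▸ hy
    exact (hK.1 this).2 []

theorem irreducibleSub_le_birecurrentSpan {W : Submodule ℚ (List A → ℚ)} [FiniteDimensional ℚ W]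
    (hW : InvariantSub W) (hfin : FiniteAction W) (hirr : IrreducibleSub W) :
    W ≤ birecurrentSpan A := by
  obtain ⟨e, he⟩ := exists_isMinRank hirr.1
  have hgen : invariantClosure (W.map (shiftOp e)) = W := by
    refine (hirr.2 _ (invariantClosure_le hW (hW.map_le e))
      (invariantSub_invariantClosure _)).resolve_left fun hbot => he.1 ?_
    exact le_bot_iff.1 (hbot ▸ le_invariantClosure _)
  let ev : List A → W →ₗ[ℚ] ℚ := fun w => LinearMap.proj w ∘ₗ W.subtype
  have hev : ev [] ∈ Submodule.span ℚ
      (Set.range fun p : List A × List A => ev (p.1 ++ e ++ p.2)) := by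
    refine FiniteDimensional.mem_span_of_iInf_ker_le_ker fun x hx => ?_
    have hx0 : x.1 = 0 := by
      refine eq_zero_of_irreducibleSub hW hirr he.1 x.2 fun m => funext fun t => ?_
      exact LinearMap.mem_ker.1 ((Submodule.mem_iInf _).1 hx (m, t))
    rw [LinearMap.mem_ker, (Subtype.ext hx0 : x = 0), map_zero]
  rw [← hgen, invariantClosure, Submodule.span_le]
  rintro _ ⟨_, ⟨g, hg, rfl⟩, m, rfl⟩
  rw [← shiftOp_append]
  have hmem : ∀ w, shiftOp w (shiftOp (e ++ m) g) ∈ W := fun w => hW _ (hW _ hg _) _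
  obtain ⟨c, hc⟩ := Finsupp.mem_span_range_iff_exists_finsupp.1 hev
  have heq : shiftOp (e ++ m) g = c.sum fun p a => a • fun w =>
      g (e ++ (m ++ w ++ p.1 ++ e) ++ p.2) := by
    funext w
    have := LinearMap.congr_fun hc ⟨_, hmem w⟩
    simpa [ev, Finsupp.sum, shiftOp_apply, eq_comm] using this
  rw [heq]
  exact Submodule.sum_mem _ fun p _ => Submodule.smul_mem _ _
    (he.sandwich_mem_birecurrentSpan hW hfin m p.1 p.2 hg)

theorem CompletelyReducibleLang.mem_birecurrentSpan {S : Set (List A)} (hS : Recognizable S)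
    (h : CompletelyReducibleLang S) : charFun S ∈ birecurrentSpan A := by
  obtain ⟨n, W, hW, -, hsup⟩ := h
  have := hS.finiteDimensional_synSpace
  have hle : ⨆ i, W i ≤ birecurrentSpan A := iSup_le fun i => by
    have := Submodule.finiteDimensional_of_le (hW i).1
    exact irreducibleSub_le_birecurrentSpan (hW i).2.1
      (hS.finiteAction_synSpace.mono (hW i).1) (hW i).2.2
  exact hle (hsup ▸ mem_synSpace _)

theorem IsMinRank.exists_compl {V : Submodule ℚ (List A → ℚ)} [FiniteDimensional ℚ V]
    (hV : InvariantSub V) (hfin : FiniteAction V) {e : List A} (he : IsMinRank V e)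
    (hgen : V ≤ invariantClosure (V.map (shiftOp e)))
    (hker : ∀ x ∈ V, (∀ m, shiftOp (m ++ e) x = 0) → x = 0)
    {X : Submodule ℚ (List A → ℚ)} (hX : InvariantSub X) :
    ∃ X', X' ≤ V ∧ InvariantSub X' ∧ Disjoint X X' ∧ V ≤ X ⊔ X' := by
  set U := V.map (shiftOp e)
  have hUV : U ≤ V := hV.map_le e
  have hmaps : ∀ y, ∀ x ∈ U, shiftOp (y ++ e) x ∈ U := by
    intro y x hx
    rw [shiftOp_append]
    exact Submodule.mem_map_of_mem (hV x (hUV hx) y)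
  let ρ : List A → Module.End ℚ U := fun y => (shiftOp (y ++ e)).restrict (hmaps y)
  have hρ : ∀ y (x : U), (ρ y x : List A → ℚ) = shiftOp (y ++ e) x := fun _ _ => rfl
  have hfinρ : (Set.range ρ).Finite := by
    refine finite_range_of_forall_eq hfin fun u v huv => ?_
    rw [domRestrict_shiftOp_eq_iff] at huv
    ext1 x
    refine Subtype.ext ?_
    rw [hρ, hρ, shiftOp_append, shiftOp_append, huv _ (hUV x.2)]
  have hmulρ : ∀ g ∈ Set.range ρ, ∀ h ∈ Set.range ρ, g * h ∈ Set.range ρ := by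
    rintro _ ⟨y, rfl⟩ _ ⟨z, rfl⟩
    refine ⟨z ++ e ++ y, ?_⟩
    ext1 x
    refine Subtype.ext ?_
    rw [Module.End.mul_apply, hρ, hρ, hρ, ← shiftOp_append, List.append_assoc]
  have hinjρ : ∀ g ∈ Set.range ρ, g = 0 ∨ Function.Injective g := by
    rintro _ ⟨y, rfl⟩
    by_cases h : V.map (shiftOp (e ++ (y ++ e))) = ⊥
    · left
      ext1 x
      refine Subtype.ext ?_
      rw [hρ, LinearMap.zero_apply, ZeroMemClass.coe_zero]
      rw [map_shiftOp_append, Submodule.eq_bot_iff] at h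
      exact h _ (Submodule.mem_map_of_mem x.2)
    · right
      intro a b hab
      exact Subtype.ext (injOn_of_map_eq_self U _ (he.map_eq hV y h) a.2 b.2
        (congrArg Subtype.val hab))
  have hNρ : ∀ g ∈ Set.range ρ, ∀ x ∈ X.comap U.subtype, g x ∈ X.comap U.subtype := by
    rintro _ ⟨y, rfl⟩ x hx
    exact hX _ hx _
  obtain ⟨N', hcompl, hN'⟩ := exists_isCompl_of_finite_of_injective hfinρ hmulρ hinjρ _ hNρ
  set P := N'.map U.subtype
  have hPU : P ≤ U := Submodule.map_subtype_le U N'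
  have hPe : ∀ x ∈ invariantClosure P, ∀ m, shiftOp (m ++ e) x ∈ P := by
    intro x hx m
    induction hx using Submodule.span_induction with
    | mem x hx =>
      obtain ⟨_, ⟨y, hy, rfl⟩, k, rfl⟩ := hx
      rw [← shiftOp_append, ← List.append_assoc]
      exact ⟨_, hN' _ ⟨k ++ m, rfl⟩ y hy, rfl⟩
    | zero => simp
    | add x y _ _ hx hy => rw [map_add]; exact add_mem hx hy
    | smul c x _ hx => rw [map_smul]; exact Submodule.smul_mem _ _ hx
  have hPV : invariantClosure P ≤ V := invariantClosure_le hV (hPU.trans hUV)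
  refine ⟨invariantClosure P, hPV, invariantSub_invariantClosure P, ?_, ?_⟩
  · rw [Submodule.disjoint_def]
    intro x hxX hxP
    refine hker x (hPV hxP) fun m => ?_
    obtain ⟨y, hy, hyx⟩ := hPe x hxP m
    have hyX : y ∈ X.comap U.subtype := by
      rw [Submodule.mem_comap, hyx]
      exact hX x hxX _
    rw [← hyx, (Submodule.disjoint_def.1 hcompl.disjoint) y hyX hy, map_zero]
  · have hinv : InvariantSub (X ⊔ invariantClosure P) := by
      intro x hx u
      obtain ⟨a, ha, b, hb, rfl⟩ := Submodule.mem_sup.1 hx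
      rw [map_add]
      exact Submodule.add_mem_sup (hX a ha u) (invariantSub_invariantClosure P b hb u)
    refine hgen.trans (invariantClosure_le hinv fun x hx => ?_)
    obtain ⟨a, ha, b, hb, hab⟩ := Submodule.mem_sup.1
      (hcompl.sup_eq_top ▸ Submodule.mem_top : (⟨x, hx⟩ : U) ∈ X.comap U.subtype ⊔ N')
    rw [← show (a + b : List A → ℚ) = x from congrArg Subtype.val hab]
    exact Submodule.add_mem_sup ha (le_invariantClosure P ⟨b, hb, rfl⟩)

theorem apply_eq_of_mem_synSpace {L : Set (List A)} {x : List A → ℚ}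
    (hx : x ∈ synSpace (charFun L)) {s s' : List A}
    (h : leftQuot (langRev L) s.reverse = leftQuot (langRev L) s'.reverse) : x s = x s' := by
  classical
  refine LinearMap.eqOn_span (f := LinearMap.proj (R := ℚ) (φ := fun _ : List A => ℚ) s)
    (g := LinearMap.proj s') ?_ hx
  rintro _ ⟨v, rfl⟩
  have := Set.ext_iff.1 h v.reverse
  simp only [leftQuot, langRev, Set.mem_ofPred_eq, List.reverse_append,
    List.reverse_reverse] at this
  simp [shiftOp_apply, charFun, Set.indicator_apply, this]

theorem apply_eq_zero_of_mem_synSpace {L : Set (List A)} {x : List A → ℚ}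
    (hx : x ∈ synSpace (charFun L)) {s : List A}
    (h : ¬ (leftQuot (langRev L) s.reverse).Nonempty) : x s = 0 := by
  classical
  refine LinearMap.eqOn_span (f := LinearMap.proj (R := ℚ) (φ := fun _ : List A => ℚ) s)
    (g := 0) ?_ hx
  rintro _ ⟨v, rfl⟩
  have : v ++ s ∉ L := fun hv => h ⟨v.reverse, by simpa [leftQuot, langRev] using hv⟩
  simp [shiftOp_apply, charFun, this]

theorem Birecurrent.exists_compl {L : Set (List A)} (hL : Birecurrent L)
    {X : Submodule ℚ (List A → ℚ)} (hX : InvariantSub X) :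
    ∃ X', X' ≤ synSpace (charFun L) ∧ InvariantSub X' ∧ Disjoint X X' ∧
      synSpace (charFun L) ≤ X ⊔ X' := by
  by_cases hbot : synSpace (charFun L) = ⊥
  · exact ⟨⊥, bot_le, fun x hx u => by simp [(Submodule.mem_bot ℚ).1 hx], disjoint_bot_right,
      hbot.le.trans bot_le⟩
  have := hL.1.1.finiteDimensional_synSpace
  obtain ⟨e, he⟩ := exists_isMinRank hbot
  obtain ⟨u, w, huw⟩ : ∃ u w, u ++ e ++ w ∈ L := by
    by_contra! hcon
    refine he.1 ?_
    rw [synSpace, Submodule.map_span, Submodule.span_eq_bot]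
    rintro _ ⟨_, ⟨u, rfl⟩, rfl⟩
    rw [← shiftOp_append, shiftOp_charFun, charFun_eq_zero_iff]
    rintro ⟨w, hw⟩
    exact hcon u w hw
  have hinv := invariantSub_synSpace (charFun L)
  refine he.exists_compl hinv hL.1.1.finiteAction_synSpace ?_ ?_ hX
  · have hmem : shiftOp (u ++ e) (charFun L) ∈ (synSpace (charFun L)).map (shiftOp e) := by
      rw [shiftOp_append]
      exact Submodule.mem_map_of_mem (hinv _ (mem_synSpace _) u)
    rw [synSpace, Submodule.span_le]
    rintro _ ⟨v, rfl⟩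
    by_cases hv : (leftQuot L v).Nonempty
    · obtain ⟨z, hz⟩ := hL.1.2 (u ++ e) v ⟨w, huw⟩ hv
      rw [SetLike.mem_coe]
      beta_reduce
      rw [shiftOp_charFun, ← hz, ← shiftOp_charFun, shiftOp_append]
      exact invariantSub_invariantClosure _ _ (le_invariantClosure _ hmem) z
    · rw [SetLike.mem_coe]
      beta_reduce
      rw [shiftOp_charFun, charFun_eq_zero_iff.2 hv]
      exact zero_mem _
  · intro x hx h
    funext t
    by_cases ht : (leftQuot (langRev L) t.reverse).Nonempty
    · obtain ⟨z, hz⟩ := hL.2.2 (w.reverse ++ e.reverse) t.reverse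
        ⟨u.reverse, by simpa [leftQuot, langRev] using huw⟩ ht
      rw [apply_eq_of_mem_synSpace (s' := z.reverse ++ e ++ w) hx (by simpa using hz.symm),
        ← shiftOp_apply (z.reverse ++ e) w x, h]
      rfl
    · exact apply_eq_zero_of_mem_synSpace hx ht

/-- The algebra generated by the shift operators. -/
def ShiftAlgebra (A : Type*) : Type _ :=
  Algebra.adjoin ℚ (Set.range (shiftOp (A := A)))

namespace ShiftAlgebra

variable (A)

noncomputable instance : Ring (ShiftAlgebra A) :=
  inferInstanceAs (Ring (Algebra.adjoin ℚ (Set.range (shiftOp (A := A)))))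

noncomputable instance : Algebra ℚ (ShiftAlgebra A) :=
  inferInstanceAs (Algebra ℚ (Algebra.adjoin ℚ (Set.range (shiftOp (A := A)))))

noncomputable instance : Module (ShiftAlgebra A) (List A → ℚ) :=
  inferInstanceAs (Module (Algebra.adjoin ℚ (Set.range (shiftOp (A := A)))) (List A → ℚ))

instance : IsScalarTower ℚ (ShiftAlgebra A) (List A → ℚ) :=
  ⟨fun _ _ _ => rfl⟩

end ShiftAlgebra

theorem InvariantSub.apply_mem {W : Submodule ℚ (List A → ℚ)} (hW : InvariantSub W)
    {r : Module.End ℚ (List A → ℚ)} (hr : r ∈ Algebra.adjoin ℚ (Set.range shiftOp))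
    {x : List A → ℚ} (hx : x ∈ W) : r x ∈ W := by
  induction hr using Algebra.adjoin_induction generalizing x with
  | mem r hr =>
    obtain ⟨u, rfl⟩ := hr
    exact hW x hx u
  | algebraMap c => exact W.smul_mem c hx
  | add r s _ _ hr hs => exact add_mem (hr hx) (hs hx)
  | mul r s _ _ hr hs => exact hr (hs hx)

/-- An invariant subspace, as a module over the algebra generated by the shift operators. -/
def InvariantSub.toSubmodule {W : Submodule ℚ (List A → ℚ)} (hW : InvariantSub W) :
    Submodule (ShiftAlgebra A) (List A → ℚ) where
  __ := W.toAddSubmonoid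
  smul_mem' r _ hx := hW.apply_mem r.2 hx

theorem invariantSub_restrictScalars (X : Submodule (ShiftAlgebra A) (List A → ℚ)) :
    InvariantSub (X.restrictScalars ℚ) := fun _ hx u =>
  X.smul_mem ⟨shiftOp u, Algebra.subset_adjoin ⟨u, rfl⟩⟩ hx

theorem Birecurrent.isSemisimpleModule {L : Set (List A)} (hL : Birecurrent L) :
    IsSemisimpleModule (ShiftAlgebra A) (invariantSub_synSpace (charFun L)).toSubmodule := by
  set V := (invariantSub_synSpace (charFun L)).toSubmodule
  have : ComplementedLattice (Set.Iic V) := by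
    refine ⟨fun ⟨X, hXV⟩ => ?_⟩
    obtain ⟨X', hX'V, hX', hdisj, hsup⟩ := hL.exists_compl (invariantSub_restrictScalars X)
    refine ⟨⟨hX'.toSubmodule, hX'V⟩, ?_⟩
    rw [Set.Iic.isCompl_iff]
    refine ⟨?_, le_antisymm (sup_le hXV hX'V) ?_⟩
    · rw [Submodule.disjoint_def] at hdisj ⊢
      exact hdisj
    · intro x hx
      obtain ⟨a, ha, b, hb, rfl⟩ := Submodule.mem_sup.1 (hsup hx)
      exact Submodule.add_mem_sup (T := hX'.toSubmodule) ha hb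
  exact { __ := V.mapIic.complementedLattice_iff.2 this }

theorem irreducibleSub_restrictScalars {X : Submodule (ShiftAlgebra A) (List A → ℚ)}
    (hX : IsAtom X) : IrreducibleSub (X.restrictScalars ℚ) := by
  refine ⟨fun h => hX.1 (by rwa [Submodule.restrictScalars_eq_bot_iff] at h), ?_⟩
  intro W hW hinv
  rcases hX.le_iff.1 (show hinv.toSubmodule ≤ X from hW) with h | h
  · left
    exact (Submodule.eq_bot_iff _).2 fun x hx => (Submodule.eq_bot_iff _).1 h x hx
  · right
    ext x
    exact SetLike.ext_iff.1 h x

theorem completelyReducibleSeries_of_isSemisimpleModule {σ : List A → ℚ}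
    [FiniteDimensional ℚ (synSpace σ)]
    [IsSemisimpleModule (ShiftAlgebra A) (invariantSub_synSpace σ).toSubmodule] :
    CompletelyReducibleSeries σ := by
  set V := (invariantSub_synSpace σ).toSubmodule
  obtain ⟨s, hind, hsup, hsimple⟩ :=
    IsSemisimpleModule.exists_sSupIndep_sSup_simples_eq_top (ShiftAlgebra A) V
  have : IsNoetherian ℚ V := inferInstanceAs (IsNoetherian ℚ (synSpace σ))
  have : IsNoetherian (ShiftAlgebra A) V := isNoetherian_of_tower ℚ this
  have hs : s.Finite := WellFoundedGT.finite_of_sSupIndep hind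
  have : Fintype s := hs.fintype
  let φ : Fin (Fintype.card s) ≃ s := (Fintype.equivFin s).symm
  let Y : Fin (Fintype.card s) → Submodule (ShiftAlgebra A) (List A → ℚ) :=
    fun i => (φ i : Submodule (ShiftAlgebra A) V).map V.subtype
  have hYV : ∀ i, Y i ≤ V := fun i => Submodule.map_subtype_le V _
  have hYatom : ∀ i, IsAtom (Y i) := by
    intro i
    have := hsimple _ (φ i).2
    rw [← isSimpleModule_iff_isAtom]
    let e : (φ i).1 ≃ₗ[ShiftAlgebra A] Y i :=
      (φ i).1.equivMapOfInjective _ V.subtype_injective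
    exact IsSimpleModule.congr (N := (φ i).1) e.symm
  have hYsup : ⨆ i, Y i = V := by
    rw [← Submodule.map_iSup, φ.iSup_comp (g := fun x : s => (x : Submodule (ShiftAlgebra A) V)),
      ← sSup_eq_iSup', hsup, Submodule.map_top, Submodule.range_subtype]
  have hYind : iSupIndep Y := by
    have h1 : iSupIndep fun i => (φ i : Submodule (ShiftAlgebra A) V) :=
      ((sSupIndep_iff _).1 hind).comp φ.injective
    intro i
    have h2 := Submodule.disjoint_map V.subtype_injective (h1 i)
    simpa only [Submodule.map_iSup] using h2
  refine ⟨_, fun i => (Y i).restrictScalars ℚ, fun i => ⟨hYV i,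
    invariantSub_restrictScalars _, irreducibleSub_restrictScalars (hYatom i)⟩, ?_, ?_⟩
  · intro i
    have h := hYind i
    rw [Submodule.disjoint_def] at h ⊢
    intro x hx hx'
    refine h x hx ?_
    have heq : ⨆ j, ⨆ (_ : j ≠ i), (Y j).restrictScalars ℚ =
        (⨆ j, ⨆ (_ : j ≠ i), Y j).restrictScalars ℚ :=
      (map_iSup₂ (Submodule.restrictScalarsLatticeHom ℚ (ShiftAlgebra A) (List A → ℚ)) _).symm
    rw [heq] at hx'
    exact hx'
  · have heq : ⨆ j, (Y j).restrictScalars ℚ = (⨆ j, Y j).restrictScalars ℚ :=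
      (map_iSup (Submodule.restrictScalarsLatticeHom ℚ (ShiftAlgebra A) (List A → ℚ)) _).symm
    rw [heq, hYsup]
    rfl

theorem completelyReducibleLang_of_mem_span {S : Set (List A)} (hS : Recognizable S) {n : ℕ}
    {c : Fin n → ℚ} {L : Fin n → Set (List A)} (hL : ∀ i, Birecurrent (L i))
    (h : charFun S = ∑ i, c i • charFun (L i)) : CompletelyReducibleLang S := by
  let V : Fin n → Submodule (ShiftAlgebra A) (List A → ℚ) := fun i =>
    (invariantSub_synSpace (charFun (L i))).toSubmodule
  have hss : IsSemisimpleModule (ShiftAlgebra A)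
      (⨆ i ∈ (Set.univ : Set (Fin n)), V i : Submodule (ShiftAlgebra A) (List A → ℚ)) :=
    isSemisimpleModule_biSup_of_isSemisimpleModule_submodule fun i _ => (hL i).isSemisimpleModule
  have hle : (invariantSub_synSpace (charFun S)).toSubmodule ≤
      ⨆ i ∈ (Set.univ : Set (Fin n)), V i := by
    refine synSpace_le (invariantSub_restrictScalars (⨆ i ∈ (Set.univ : Set (Fin n)), V i)) ?_
    rw [h]
    refine Submodule.sum_mem _ fun i _ => Submodule.smul_mem _ _ ?_
    exact Submodule.mem_iSup_of_mem i (Submodule.mem_iSup_of_mem (Set.mem_univ i)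
      (mem_synSpace (charFun (L i))))
  have := IsSemisimpleModule.of_injective (Submodule.inclusion hle)
    (Submodule.inclusion_injective hle)
  have := hS.finiteDimensional_synSpace
  exact completelyReducibleSeries_of_isSemisimpleModule

end Birec

/-- **Theorem.** A recognizable language `S` is completely reducible over `ℚ` if and
only if its characteristic series is a `ℚ`-linear combination of characteristic series
of birecurrent languages. -/
theorem completelyReducible_iff_linear_combination {A : Type*} [Fintype A]
    (S : Set (List A)) (hS : Recognizable S) :
    CompletelyReducibleLang S ↔
      ∃ (n : ℕ) (c : Fin n → ℚ) (L : Fin n → Set (List A)),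
        (∀ i, Birecurrent (L i)) ∧ charFun S = ∑ i, c i • charFun (L i) := by
  refine ⟨fun h => ?_, fun ⟨n, c, L, hL, h⟩ => completelyReducibleLang_of_mem_span hS hL h⟩
  obtain ⟨n, c, g, hg⟩ := Submodule.mem_span_set'.1 (h.mem_birecurrentSpan hS)
  choose L hL hLg using fun i => (g i).2
  exact ⟨n, c, L, hL, by simp only [hLg, hg]⟩
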